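/- The function f(z) = Σ_{k=1}^{∞} 2^{−(k−1)!} · z^{k!}, which is holomorphic in the open unit disk and continuous on the closed unit disk \overline{U}, is quasianalytic in the sense of Gonchar on \overline{U}, i.e. liminf_{k→∞} ρ_k(f, \overline{U})^{1/k} < 1, and consequently its graph Γ_f = {(z, f(z)) ∈ ℂ² : z ∈ \overline{U}} is pluripolar in ℂ². -/

import Mathlib

open Filter Metric

noncomputable section

/-- A subharmonic function on `ℂ` with values in `[-∞, ∞)`: upper semicontinuous,
never `+∞`, and dominated on every closed disk by every continuous function which is
harmonic inside the disk and dominates it on the boundary circle. -/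
def SubharmonicFn (u : ℂ → EReal) : Prop :=
  UpperSemicontinuous u ∧ (∀ z, u z ≠ ⊤) ∧
  ∀ (c : ℂ) (r : ℝ), 0 < r →
    ∀ h : ℂ → ℝ, ContinuousOn h (closedBall c r) →
      (∃ F : ℂ → ℂ, DifferentiableOn ℂ F (ball c r) ∧ ∀ z ∈ ball c r, h z = (F z).re) →
      (∀ z ∈ sphere c r, u z ≤ ((h z : ℝ) : EReal)) →
      ∀ z ∈ closedBall c r, u z ≤ ((h z : ℝ) : EReal)

/-- A plurisubharmonic function on a complex normed space: upper semicontinuous,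
never `+∞`, and subharmonic along every complex line. -/
def PshFn {E : Type*} [NormedAddCommGroup E] [NormedSpace ℂ E] (u : E → EReal) : Prop :=
  UpperSemicontinuous u ∧ (∀ z, u z ≠ ⊤) ∧
  ∀ a v : E, SubharmonicFn (fun w : ℂ => u (a + w • v))

/-- A set is pluripolar if it is contained in the `-∞` set of a plurisubharmonic
function which is not identically `-∞`. -/
def Pluripolar {E : Type*} [NormedAddCommGroup E] [NormedSpace ℂ E] (S : Set E) : Prop :=
  ∃ u : E → EReal, PshFn u ∧ (∃ z, u z ≠ ⊥) ∧ ∀ p ∈ S, u p = ⊥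

/-- The lacunary series `f(z) = Σ_{k≥1} 2^{−(k−1)!} z^{k!}`
(reindexed as `Σ_{j≥0} 2^{−j!} z^{(j+1)!}`). -/
def lacunaryF (z : ℂ) : ℂ :=
  ∑' j : ℕ, ((2 : ℂ) ^ (Nat.factorial j))⁻¹ * z ^ (Nat.factorial (j + 1))

/-- `rhoDisk f k` : the deviation of the best uniform approximation of `f` on the
closed unit disk by rational functions of degree at most `k`. -/
def rhoDisk (f : ℂ → ℂ) (k : ℕ) : ℝ :=
  sInf {t : ℝ | ∃ p q : Polynomial ℂ, p.natDegree ≤ k ∧ q.natDegree ≤ k ∧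
    (∀ z ∈ closedBall (0 : ℂ) 1, q.eval z ≠ 0) ∧
    ∀ z ∈ closedBall (0 : ℂ) 1, ‖f z - p.eval z / q.eval z‖ ≤ t}

/-!
The partial sums `S_n` of the series are polynomials of degree `n!` with
`|f - S_n| ≤ 2 * 2 ^ (-n!)` on the closed unit disk, which is already the Gonchar property.

For pluripolarity, note that `|S_n| ≤ n` on the larger disk of radius `r = 2 ^ (1 / n)`. Put
`d = n ^ 2`. The polynomials `P` in two variables of degree `< d` in each of them form a space of
dimension `d ^ 2 = n ^ 4`, so some normalised `P` makes `z ↦ P (z, S_n z)` vanish to order almost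
`n ^ 4` at the origin. By the Schwarz lemma `P` is then at most
`(C * n ^ 2) ^ (n ^ 2) * r ^ (-n ^ 4)`, with `r ^ (-n ^ 4) = 2 ^ (-n ^ 3)`, on the graph of `S_n`
over the unit disk, and likewise on that of `f`; for large `n` this is less than `exp (-L * d)` for
any prescribed `L`. Normalising `P` on a small bidisk keeps it from being small everywhere near a
given point. For a suitable sequence of such `P_k`, with `m_k = L_k * d_k` and `L_k` growing fast,
`∑ k, log |P_k| / m_k` is plurisubharmonic, is `-∞` on the graph because each term is at most `-1`
there, and is finite at a point supplied by Baire's theorem.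
-/

open Polynomial Topology

section MaximumPrinciple

variable {E : Type*} [NormedAddCommGroup E] [NormedSpace ℂ E]

/- Mathlib's maximum modulus principle asks for `G` itself to extend continuously to the closure;
for `G = Q * exp (-F)` below only the norm does. -/
theorem le_of_forall_mem_frontier_le_of_eqOn_norm [ProperSpace E] [Nontrivial E] {U : Set E}
    (hc : IsPreconnected U) (ho : IsOpen U) (hb : Bornology.IsBounded U) {G : E → ℂ}
    (hG : DifferentiableOn ℂ G U) {N : E → ℝ} (hN : ContinuousOn N (closure U))
    (hGN : Set.EqOn (fun x => ‖G x‖) N U) {C : ℝ} (hC : ∀ x ∈ frontier U, N x ≤ C)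
    {x : E} (hx : x ∈ closure U) : N x ≤ C := by
  obtain ⟨y, hy, hmax⟩ := hb.isCompact_closure.exists_isMaxOn ⟨x, hx⟩ hN
  refine (hmax hx).trans ?_
  by_cases hyU : y ∈ U
  · have hGmax : IsMaxOn (norm ∘ G) U y := fun z hz => by
      simpa [hGN hz, hGN hyU] using hmax (subset_closure hz)
    have hconst : Set.EqOn N (fun _ => N y) U := fun z hz => by
      simpa [hGN hz, hGN hyU] using
        Complex.norm_eqOn_of_isPreconnected_of_isMaxOn hc ho hG hyU hGmax hz
    obtain ⟨w, hw⟩ : (frontier U).Nonempty :=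
      nonempty_frontier_iff.2 ⟨⟨y, hyU⟩, fun h => NormedSpace.unbounded_univ ℂ E (h ▸ hb)⟩
    exact (hconst.of_subset_closure hN continuousOn_const subset_closure subset_rfl
      (frontier_subset_closure hw)).symm.trans_le (hC w hw)
  · exact hC y (ho.frontier_eq ▸ ⟨hy, hyU⟩)

theorem norm_le_exp_of_forall_mem_sphere {Q F : ℂ → ℂ} {h : ℂ → ℝ} {c : ℂ} {r : ℝ} (hr : r ≠ 0)
    (hQ : DiffContOnCl ℂ Q (ball c r)) (hh : ContinuousOn h (closedBall c r))
    (hF : DifferentiableOn ℂ F (ball c r)) (hhF : ∀ z ∈ ball c r, h z = (F z).re)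
    (hle : ∀ z ∈ sphere c r, ‖Q z‖ ≤ Real.exp (h z)) {z : ℂ} (hz : z ∈ closedBall c r) :
    ‖Q z‖ ≤ Real.exp (h z) := by
  have hexp : ∀ w, ‖Q w‖ ≤ Real.exp (h w) ↔ ‖Q w‖ * Real.exp (-h w) ≤ 1 := fun w => by
    rw [Real.exp_neg, ← div_eq_mul_inv, div_le_one (Real.exp_pos _)]
  rw [← closure_ball c hr] at hh hz
  refine (hexp z).2 (le_of_forall_mem_frontier_le_of_eqOn_norm (convex_ball c r).isPreconnected
    isOpen_ball isBounded_ball (hQ.differentiableOn.mul hF.neg.cexp)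
    (hQ.continuousOn.norm.mul hh.neg.rexp) (fun w hw => ?_) (fun w hw => ?_) hz)
  · simp [Complex.norm_exp, hhF w hw]
  · exact (hexp w).1 (hle w (by rwa [frontier_ball c hr] at hw))

end MaximumPrinciple

section ExtLog

/-- The logarithm of a nonnegative real number as an extended real, with `extLog 0 = -∞`
(unlike `Real.log 0 = 0`). -/
def extLog (t : ℝ) : EReal := ENNReal.log (ENNReal.ofReal t)

theorem extLog_exp (a : ℝ) : extLog (Real.exp a) = a := by
  rw [extLog, ENNReal.log_ofReal_of_pos (Real.exp_pos a), Real.log_exp]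

theorem extLog_le_coe_iff {t a : ℝ} : extLog t ≤ a ↔ t ≤ Real.exp a := by
  rw [← extLog_exp, extLog, extLog, ENNReal.log_le_log_iff,
    ENNReal.ofReal_le_ofReal_iff (Real.exp_pos a).le]

theorem coe_le_extLog_iff {t a : ℝ} : (a : EReal) ≤ extLog t ↔ Real.exp a ≤ t := by
  rw [← extLog_exp, extLog, extLog, ENNReal.log_le_log_iff,
    ENNReal.ofReal_le_ofReal_iff', or_iff_left (Real.exp_pos a).not_ge]

theorem extLog_ne_top (t : ℝ) : extLog t ≠ ⊤ := by
  rw [extLog, Ne, ENNReal.log_eq_top_iff]; exact ENNReal.ofReal_ne_top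

theorem extLog_mono : Monotone extLog :=
  fun _ _ h => ENNReal.log_le_log (ENNReal.ofReal_le_ofReal h)

theorem continuous_extLog : Continuous extLog :=
  ENNReal.continuous_log.comp ENNReal.continuous_ofReal

theorem extLog_mul_exp (t a : ℝ) : extLog (t * Real.exp a) = extLog t + a := by
  rw [← extLog_exp a, extLog, ENNReal.ofReal_mul' (Real.exp_pos a).le, ENNReal.log_mul_add]; rfl

theorem rpow_inv_natCast_le_exp_iff {t a : ℝ} (ht : 0 ≤ t) {m : ℕ} (hm : 0 < m) :
    t ^ (m : ℝ)⁻¹ ≤ Real.exp a ↔ t ≤ Real.exp (m * a) := by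
  rw [Real.rpow_inv_le_iff_of_pos ht (Real.exp_pos a).le (by exact_mod_cast hm), Real.rpow_natCast,
    Real.exp_nat_mul]

theorem exp_le_rpow_inv_natCast_iff {t a : ℝ} (ht : 0 ≤ t) {m : ℕ} (hm : 0 < m) :
    Real.exp a ≤ t ^ (m : ℝ)⁻¹ ↔ Real.exp (m * a) ≤ t := by
  rw [Real.le_rpow_inv_iff_of_pos (Real.exp_pos a).le ht (by exact_mod_cast hm), Real.rpow_natCast,
    Real.exp_nat_mul]

end ExtLog

section Plurisubharmonic

variable {E : Type*} [NormedAddCommGroup E] [NormedSpace ℂ E]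

theorem continuous_extLog_norm_rpow {X : Type*} [TopologicalSpace X] {Q : X → ℂ}
    (hQ : Continuous Q) {a : ℝ} (ha : 0 ≤ a) : Continuous fun x => extLog (‖Q x‖ ^ a) :=
  continuous_extLog.comp (hQ.norm.rpow_const fun _ => Or.inr ha)

theorem subharmonicFn_extLog_norm_rpow {Q : ℂ → ℂ} (hQ : Differentiable ℂ Q) {M : ℕ} (hM : 0 < M) :
    SubharmonicFn fun z => extLog (‖Q z‖ ^ (M : ℝ)⁻¹) := by
  refine ⟨(continuous_extLog_norm_rpow hQ.continuous (by positivity)).upperSemicontinuous,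
    fun _ => extLog_ne_top _, fun c r hr h hh ⟨F, hF, hhF⟩ hle z hz => ?_⟩
  simp only [extLog_le_coe_iff, rpow_inv_natCast_le_exp_iff (norm_nonneg _) hM] at hle ⊢
  exact norm_le_exp_of_forall_mem_sphere hr.ne' hQ.diffContOnCl (continuousOn_const.mul hh)
    (hF.const_mul (M : ℂ)) (fun w hw => by simp [hhF w hw]) hle hz

theorem pshFn_extLog_norm_rpow {Q : E → ℂ} (hQ : Differentiable ℂ Q) {M : ℕ} (hM : 0 < M) :
    PshFn fun x => extLog (‖Q x‖ ^ (M : ℝ)⁻¹) :=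
  ⟨(continuous_extLog_norm_rpow hQ.continuous (by positivity)).upperSemicontinuous,
    fun _ => extLog_ne_top _,
    fun _ _ => subharmonicFn_extLog_norm_rpow (hQ.comp (by fun_prop)) hM⟩

theorem exists_forall_lt_of_antitone_of_isCompact {X ι β : Type*} [TopologicalSpace X]
    [SemilatticeSup ι] [Nonempty ι] [LinearOrder β] [DenselyOrdered β] {K : Set X}
    (hK : IsCompact K) {v : ι → X → β} {g : X → β} (hv : ∀ i, UpperSemicontinuousOn (v i) K)
    (hanti : ∀ x, Antitone fun i => v i x) (hg : LowerSemicontinuousOn g K)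
    (hlt : ∀ x ∈ K, ∃ i, v i x < g x) : ∃ i, ∀ x ∈ K, v i x < g x := by
  refine hK.induction_on (p := fun s => ∃ i, ∀ x ∈ s, v i x < g x) (by simp)
    (fun s t hst ⟨i, hi⟩ => ⟨i, fun x hx => hi x (hst hx)⟩) ?_ fun x hx => ?_
  · rintro s t ⟨i, hi⟩ ⟨j, hj⟩
    refine ⟨i ⊔ j, fun x hx => hx.elim (fun hs => ?_) fun ht => ?_⟩
    · exact (hanti x le_sup_left).trans_lt (hi x hs)
    · exact (hanti x le_sup_right).trans_lt (hj x ht)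
  · obtain ⟨i, hi⟩ := hlt x hx
    obtain ⟨y, hvy, hyg⟩ := exists_between hi
    exact ⟨_, (hv i x hx y hvy).and (hg x hx y hyg), i, fun w hw => hw.1.trans hw.2⟩

/- The majorants `v n` need not be subharmonic themselves: in the application they are
`u n` plus a multiple of `1 + ‖x‖`, which is not the logarithm of a holomorphic function. -/
theorem SubharmonicFn.iInf_of_le_add {u v : ℕ → ℂ → EReal} {ε : ℕ → ℂ → ℝ}
    (hu : ∀ n, SubharmonicFn (u n)) (hv : ∀ n, UpperSemicontinuous (v n))
    (hanti : ∀ z, Antitone fun n => v n z) (huv : ∀ n z, u n z ≤ v n z)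
    (hvu : ∀ n z, v n z ≤ u n z + ε n z) (hε : ∀ z, Tendsto (fun n => ε n z) atTop (𝓝 0)) :
    SubharmonicFn fun z => ⨅ n, v n z := by
  refine ⟨upperSemicontinuous_iInf hv, fun z => ?_, fun c r hr h hh hF hle z hz => ?_⟩
  · exact ((iInf_le _ 0).trans_lt ((hvu 0 z).trans_lt
      (EReal.add_lt_top ((hu 0).2.1 z) (EReal.coe_ne_top _)))).ne
  refine EReal.le_of_forall_lt_iff_le.1 fun β hβ => ?_
  obtain ⟨η, hη, hβη⟩ : ∃ η > 0, h z + η + η = β :=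
    ⟨(β - h z) / 2, half_pos (sub_pos.2 (EReal.coe_lt_coe_iff.1 hβ)), by ring⟩
  have hhη : ContinuousOn (fun w => h w + η) (closedBall c r) := hh.add continuousOn_const
  obtain ⟨n, hn⟩ : ∃ n, ∀ w ∈ sphere c r, v n w < ((h w + η : ℝ) : EReal) := by
    refine exists_forall_lt_of_antitone_of_isCompact (isCompact_sphere c r)
      (fun n => (hv n).upperSemicontinuousOn _) hanti
      (continuous_coe_real_ereal.comp_continuousOn
        (hhη.mono sphere_subset_closedBall)).lowerSemicontinuousOn fun w hw => ?_
    exact iInf_lt_iff.1 ((hle w hw).trans_lt (EReal.coe_lt_coe_iff.2 (lt_add_of_pos_right _ hη)))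
  obtain ⟨k, hkn, hεk⟩ :=
    ((eventually_ge_atTop n).and ((hε z).eventually_lt_const hη)).exists
  have huk : u k z ≤ ((h z + η : ℝ) : EReal) := by
    obtain ⟨F, hF, hhF⟩ := hF
    exact (hu k).2.2 c r hr _ hhη ⟨fun w => F w + η, hF.add_const _, fun w hw => by simp [hhF w hw]⟩
      (fun w hw => ((huv k w).trans (hanti w hkn)).trans (hn w hw).le) z hz
  calc ⨅ n, v n z ≤ u k z + ε k z := (iInf_le _ k).trans (hvu k z)
    _ ≤ ((h z + η : ℝ) : EReal) + η := by gcongr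
    _ = β := by rw [← EReal.coe_add, hβη]

theorem PshFn.iInf_of_le_add {u v : ℕ → E → EReal} {ε : ℕ → E → ℝ}
    (hu : ∀ n, PshFn (u n)) (hv : ∀ n, UpperSemicontinuous (v n))
    (hanti : ∀ x, Antitone fun n => v n x) (huv : ∀ n x, u n x ≤ v n x)
    (hvu : ∀ n x, v n x ≤ u n x + ε n x) (hε : ∀ x, Tendsto (fun n => ε n x) atTop (𝓝 0)) :
    PshFn fun x => ⨅ n, v n x := by
  have hline (a b : E) : SubharmonicFn fun w : ℂ => ⨅ n, v n (a + w • b) :=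
    SubharmonicFn.iInf_of_le_add (fun n => (hu n).2.2 a b) (fun n => (hv n).comp (by fun_prop))
      (fun _ => hanti _) (fun n _ => huv n _) (fun n _ => hvu n _) fun _ => hε _
  exact ⟨upperSemicontinuous_iInf hv, fun x => by simpa using (hline x 0).2.1 0, hline⟩

end Plurisubharmonic

section PluripolarityCriterion

variable {E : Type*} [NormedAddCommGroup E] [NormedSpace ℂ E]

/-- An entire function `P` witnessing that `S` is thin: `log ‖P‖ / m` is at most `-1` on `S`
while its global growth is at most `δ (1 + ‖x‖)`. -/
structure IsPolarWitness (S : Set E) (δ : ℝ) (m : ℕ) (P : E → ℂ) : Prop where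
  differentiable : Differentiable ℂ P
  pos : 0 < m
  norm_le : ∀ x, ‖P x‖ ≤ Real.exp (m * (δ * (1 + ‖x‖)))
  norm_le_of_mem : ∀ x ∈ S, ‖P x‖ ≤ Real.exp (-m)

/-- The product of the roots `‖P k‖ ^ (1 / m k)` over `k < n`, that is, the exponential of
`∑ k < n, log ‖P k‖ / m k`. -/
def rootProd {X : Type*} (P : ℕ → X → ℂ) (m : ℕ → ℕ) (n : ℕ) (x : X) : ℝ :=
  ∏ k ∈ Finset.range n, ‖P k x‖ ^ ((m k : ℝ)⁻¹)

theorem rootProd_nonneg {X : Type*} (P : ℕ → X → ℂ) (m : ℕ → ℕ) (n : ℕ) (x : X) :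
    0 ≤ rootProd P m n x :=
  Finset.prod_nonneg fun _ _ => by positivity

theorem rpow_inv_mul_rpow_inv {s t : ℝ} (hs : 0 ≤ s) (ht : 0 ≤ t) {M m : ℕ} (hM : M ≠ 0)
    (hm : m ≠ 0) :
    s ^ (M : ℝ)⁻¹ * t ^ (m : ℝ)⁻¹ = (s ^ m * t ^ M) ^ ((M * m : ℕ) : ℝ)⁻¹ := by
  rw [Real.mul_rpow (by positivity) (by positivity), Nat.cast_mul, ← Real.rpow_natCast,
    ← Real.rpow_natCast, ← Real.rpow_mul hs, ← Real.rpow_mul ht]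
  congr 2 <;> field_simp

theorem exists_rootProd_eq_norm_rpow {P : ℕ → E → ℂ} (hP : ∀ k, Differentiable ℂ (P k))
    {m : ℕ → ℕ} (hm : ∀ k, 0 < m k) (n : ℕ) : ∃ (Q : E → ℂ) (M : ℕ), Differentiable ℂ Q ∧ 0 < M ∧
      rootProd P m n = fun x => ‖Q x‖ ^ (M : ℝ)⁻¹ := by
  induction n with
  | zero => exact ⟨fun _ => 1, 1, differentiable_const _, one_pos, by ext; simp [rootProd]⟩
  | succ n ih =>
    obtain ⟨Q, M, hQ, hM, hQM⟩ := ih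
    refine ⟨fun x => Q x ^ m n * P n x ^ M, M * m n, (hQ.pow _).mul ((hP n).pow _),
      Nat.mul_pos hM (hm n), funext fun x => ?_⟩
    rw [rootProd, Finset.prod_range_succ, ← rootProd, hQM, norm_mul, norm_pow, norm_pow,
      rpow_inv_mul_rpow_inv (norm_nonneg _) (norm_nonneg _) hM.ne' (hm n).ne']

theorem exp_sum_le_rootProd {X : Type*} {P : ℕ → X → ℂ} {m : ℕ → ℕ} (hm : ∀ k, 0 < m k)
    {a : ℕ → ℝ} {x : X} (ha : ∀ k, Real.exp (m k * a k) ≤ ‖P k x‖) (n : ℕ) :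
    Real.exp (∑ k ∈ Finset.range n, a k) ≤ rootProd P m n x := by
  rw [Real.exp_sum]
  exact Finset.prod_le_prod (fun _ _ => (Real.exp_pos _).le) fun k _ =>
    (exp_le_rpow_inv_natCast_iff (norm_nonneg _) (hm k)).2 (ha k)

theorem rootProd_le_exp_sum {X : Type*} {P : ℕ → X → ℂ} {m : ℕ → ℕ} (hm : ∀ k, 0 < m k)
    {a : ℕ → ℝ} {x : X} (ha : ∀ k, ‖P k x‖ ≤ Real.exp (m k * a k)) (n : ℕ) :
    rootProd P m n x ≤ Real.exp (∑ k ∈ Finset.range n, a k) := by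
  rw [Real.exp_sum]
  exact Finset.prod_le_prod (fun _ _ => by positivity) fun k _ =>
    (rpow_inv_natCast_le_exp_iff (norm_nonneg _) (hm k)).2 (ha k)

theorem antitone_rootProd_mul_exp_tsum {X : Type*} {P : ℕ → X → ℂ} {m : ℕ → ℕ}
    (hm : ∀ k, 0 < m k) {a : ℕ → ℝ} (hsum : Summable a) {x : X}
    (ha : ∀ k, ‖P k x‖ ≤ Real.exp (m k * a k)) :
    Antitone fun n => rootProd P m n x * Real.exp (∑' k, a (k + n)) := by
  refine antitone_nat_of_succ_le fun n => ?_
  have htail : ∑' k, a (k + n) = a n + ∑' k, a (k + (n + 1)) := by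
    rw [((summable_nat_add_iff n).2 hsum).tsum_eq_zero_add]
    simp only [zero_add, add_assoc, add_comm 1 n]
  rw [htail, Real.exp_add, rootProd, Finset.prod_range_succ, ← rootProd, mul_assoc]
  gcongr
  · exact rootProd_nonneg _ _ _ _
  · exact (rpow_inv_natCast_le_exp_iff (norm_nonneg _) (hm n)).2 (ha n)

theorem pshFn_iInf_extLog_rootProd {P : ℕ → E → ℂ} (hP : ∀ k, Differentiable ℂ (P k)) {m : ℕ → ℕ}
    (hm : ∀ k, 0 < m k) {δ : ℕ → ℝ} (hδ : ∀ k, 0 ≤ δ k) (hsum : Summable δ)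
    (hPδ : ∀ k x, ‖P k x‖ ≤ Real.exp (m k * (δ k * (1 + ‖x‖)))) :
    PshFn fun x => ⨅ n, extLog (rootProd P m n x * Real.exp (∑' k, δ (k + n) * (1 + ‖x‖))) := by
  refine PshFn.iInf_of_le_add (u := fun n x => extLog (rootProd P m n x)) (fun n => ?_)
    (fun n => ?_) (fun x => ?_) (fun n x => ?_) (fun n x => (extLog_mul_exp _ _).le)
    fun x => tendsto_sum_nat_add fun k => δ k * (1 + ‖x‖)
  · obtain ⟨Q, M, hQ, hM, hQM⟩ := exists_rootProd_eq_norm_rpow hP hm n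
    exact hQM ▸ pshFn_extLog_norm_rpow hQ hM
  · obtain ⟨Q, M, hQ, hM, hQM⟩ := exists_rootProd_eq_norm_rpow hP hm n
    refine (continuous_extLog.comp (.mul ?_ ?_)).upperSemicontinuous
    · exact hQM ▸ hQ.continuous.norm.rpow_const fun _ => Or.inr (by positivity)
    · simp only [tsum_mul_right]; fun_prop
  · exact extLog_mono.comp_antitone
      (antitone_rootProd_mul_exp_tsum hm (hsum.mul_right _) fun k => hPδ k x)
  · exact extLog_mono (le_mul_of_one_le_right (rootProd_nonneg _ _ _ _)
      (Real.one_le_exp (tsum_nonneg fun k => mul_nonneg (hδ _) (by positivity))))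

theorem pluripolar_of_forall_isPolarWitness {S : Set E} {δ : ℕ → ℝ} (hδ : ∀ k, 0 ≤ δ k)
    (hsum : Summable δ) {P : ℕ → E → ℂ} {m : ℕ → ℕ}
    (hP : ∀ k, IsPolarWitness S (δ k) (m k) (P k)) {p : E}
    (hp : ∀ k, Real.exp (-(m k * δ k)) ≤ ‖P k p‖) : Pluripolar S := by
  have hm k := (hP k).pos
  refine ⟨_, pshFn_iInf_extLog_rootProd (fun k => (hP k).differentiable) hm hδ hsum
    fun k => (hP k).norm_le, ⟨p, ?_⟩, fun x hx => ?_⟩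
  · refine ((EReal.bot_lt_coe (-∑' k, δ k)).trans_le (le_iInf fun n => ?_)).ne'
    rw [coe_le_extLog_iff]
    calc Real.exp (-∑' k, δ k) ≤ Real.exp (∑ k ∈ Finset.range n, -δ k) := by
          rw [Finset.sum_neg_distrib]; gcongr; exact hsum.sum_le_tsum _ fun k _ => hδ k
      _ ≤ rootProd P m n p := exp_sum_le_rootProd hm (fun k => by simpa using hp k) n
      _ ≤ _ := le_mul_of_one_le_right (rootProd_nonneg _ _ _ _)
        (Real.one_le_exp (tsum_nonneg fun k => mul_nonneg (hδ _) (by positivity)))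
  · refine (EReal.eq_bot_iff_forall_lt _).2 fun y => ?_
    obtain ⟨n, hn, hyn⟩ := (((tendsto_sum_nat_add fun k => δ k * (1 + ‖x‖)).eventually_lt_const
      one_pos).and (tendsto_natCast_atTop_atTop.eventually_gt_atTop (1 - y))).exists
    have hroot : rootProd P m n x ≤ Real.exp (-n) := by
      simpa using rootProd_le_exp_sum (a := fun _ => -1) hm
        (fun k => by simpa using (hP k).norm_le_of_mem x hx) n
    refine (iInf_le _ n).trans_lt ?_
    calc extLog (rootProd P m n x * Real.exp (∑' k, δ (k + n) * (1 + ‖x‖)))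
        ≤ ((-n + 1 : ℝ) : EReal) := by rw [extLog_le_coe_iff, Real.exp_add]; gcongr
      _ < y := EReal.coe_lt_coe_iff.2 (by linarith)

/- Every open condition `exp (-(m * δ)) < ‖P x‖` is dense, so by Baire's theorem one point `p`
satisfies it for the whole sequence `δ = 1, 1/2, 1/4, …`. -/
theorem pluripolar_of_dense [CompleteSpace E] {S : Set E}
    (h : ∀ δ > 0, Dense {x | ∃ m P, IsPolarWitness S δ m P ∧ Real.exp (-(m * δ)) < ‖P x‖}) :
    Pluripolar S := by
  have hopen (δ : ℝ) :
      IsOpen {x | ∃ m P, IsPolarWitness S δ m P ∧ Real.exp (-(m * δ)) < ‖P x‖} := by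
    refine isOpen_iff_mem_nhds.2 fun x ⟨m, P, hP, hx⟩ => ?_
    filter_upwards [hP.differentiable.continuous.norm.continuousAt.eventually_const_lt hx] with y hy
      using ⟨m, P, hP, hy⟩
  obtain ⟨p, hp⟩ := (dense_iInter_of_isOpen_nat (fun k : ℕ => hopen ((1 / 2) ^ k))
    fun k => h _ (by positivity)).nonempty
  choose m P hP hpP using Set.mem_iInter.1 hp
  exact pluripolar_of_forall_isPolarWitness (fun _ => by positivity) summable_geometric_two hP
    fun k => (hpP k).le

end PluripolarityCriterion

section BoxPolynomial

/-- The value at `(s, t)` of the polynomial in two variables of degree less than `d` in each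
of them, with coefficients `b`. -/
def boxEval {d : ℕ} (b : Fin d × Fin d → ℂ) (s t : ℂ) : ℂ :=
  ∑ x, b x * (s ^ (x.1 : ℕ) * t ^ (x.2 : ℕ))

variable {d : ℕ} {b : Fin d × Fin d → ℂ} {s t t' : ℂ} {K : ℝ}

theorem differentiable_boxEval {E : Type*} [NormedAddCommGroup E] [NormedSpace ℂ E] {f g : E → ℂ}
    (hf : Differentiable ℂ f) (hg : Differentiable ℂ g) :
    Differentiable ℂ fun x => boxEval b (f x) (g x) := by
  unfold boxEval; fun_prop

theorem norm_pow_le_pow_of_le {z : ℂ} {K : ℝ} (hK : 1 ≤ K) (hz : ‖z‖ ≤ K) {j d : ℕ} (hj : j ≤ d) :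
    ‖z ^ j‖ ≤ K ^ d := by
  rw [norm_pow]
  exact (pow_le_pow_left₀ (norm_nonneg _) hz _).trans (pow_le_pow_right₀ hK hj)

theorem norm_sum_box_le {c : Fin d × Fin d → ℂ} {C : ℝ} (hc : ∀ x, ‖c x‖ ≤ C) :
    ‖∑ x, b x * c x‖ ≤ ‖b‖ * ((d : ℝ) ^ 2 * C) := by
  calc ‖∑ x, b x * c x‖ ≤ ∑ _x : Fin d × Fin d, ‖b‖ * C :=
        norm_sum_le_of_le _ fun x _ => norm_mul_le_of_le (norm_le_pi_norm b x) (hc x)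
    _ = ‖b‖ * ((d : ℝ) ^ 2 * C) := by simp [pow_two]; ring

theorem norm_boxEval_le (hK : 1 ≤ K) (hs : ‖s‖ ≤ K) (ht : ‖t‖ ≤ K) :
    ‖boxEval b s t‖ ≤ ‖b‖ * ((d : ℝ) ^ 2 * K ^ (2 * d)) := by
  refine norm_sum_box_le fun x => ?_
  rw [two_mul, pow_add]
  exact norm_mul_le_of_le (norm_pow_le_pow_of_le hK hs x.1.2.le)
    (norm_pow_le_pow_of_le hK ht x.2.2.le)

theorem norm_boxEval_le_exp {y : ℝ} (hy : 0 ≤ y) (hs : ‖s‖ ≤ Real.exp y) (ht : ‖t‖ ≤ Real.exp y) :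
    ‖boxEval b s t‖ ≤ ‖b‖ * Real.exp (d * (2 + 2 * y)) := by
  have hd : (d : ℝ) ≤ Real.exp d := (lt_add_one _).le.trans (Real.add_one_le_exp _)
  calc ‖boxEval b s t‖ ≤ ‖b‖ * ((d : ℝ) ^ 2 * Real.exp y ^ (2 * d)) :=
        norm_boxEval_le (Real.one_le_exp hy) hs ht
    _ ≤ ‖b‖ * (Real.exp d ^ 2 * Real.exp y ^ (2 * d)) := by gcongr
    _ = ‖b‖ * Real.exp (d * (2 + 2 * y)) := by
        rw [← Real.exp_nat_mul, ← Real.exp_nat_mul, ← Real.exp_add]; push_cast; ring_nf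

theorem norm_pow_sub_pow_le {R : Type*} [NormedCommRing R] [NormOneClass R] {x y : R} {K : ℝ}
    (hx : ‖x‖ ≤ K) (hy : ‖y‖ ≤ K) (n : ℕ) : ‖x ^ n - y ^ n‖ ≤ n * K ^ (n - 1) * ‖x - y‖ := by
  have : 0 ≤ K := (norm_nonneg x).trans hx
  rw [← (Commute.all x y).mul_geom_sum₂, mul_comm]
  calc ‖(∑ i ∈ Finset.range n, x ^ i * y ^ (n - 1 - i)) * (x - y)‖
      ≤ (∑ i ∈ Finset.range n, K ^ i * K ^ (n - 1 - i)) * ‖x - y‖ := by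
        refine norm_mul_le_of_le (norm_sum_le_of_le _ fun i _ => norm_mul_le_of_le ?_ ?_) le_rfl
        · exact (norm_pow_le _ _).trans (by gcongr)
        · exact (norm_pow_le _ _).trans (by gcongr)
    _ = n * K ^ (n - 1) * ‖x - y‖ := by
        rw [Finset.sum_congr rfl fun i hi => show K ^ i * K ^ (n - 1 - i) = K ^ (n - 1) by
          rw [← pow_add, Nat.add_sub_cancel' (Nat.le_sub_one_of_lt (Finset.mem_range.1 hi))]]
        simp

theorem norm_boxEval_sub_le (hK : 1 ≤ K) (hs : ‖s‖ ≤ K) (ht : ‖t‖ ≤ K) (ht' : ‖t'‖ ≤ K) :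
    ‖boxEval b s t - boxEval b s t'‖ ≤ ‖b‖ * ((d : ℝ) ^ 3 * K ^ (2 * d) * ‖t - t'‖) := by
  have hterm (x : Fin d × Fin d) :
      ‖s ^ (x.1 : ℕ) * t ^ (x.2 : ℕ) - s ^ (x.1 : ℕ) * t' ^ (x.2 : ℕ)‖ ≤
        K ^ d * (d * K ^ d * ‖t - t'‖) := by
    rw [← mul_sub]
    refine norm_mul_le_of_le (norm_pow_le_pow_of_le hK hs x.1.2.le)
      ((norm_pow_sub_pow_le ht ht' _).trans ?_)
    have hxd : (x.2 : ℕ) ≤ d := x.2.2.le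
    gcongr
    exact (Nat.sub_le _ _).trans hxd
  calc ‖boxEval b s t - boxEval b s t'‖
      = ‖∑ x, b x * (s ^ (x.1 : ℕ) * t ^ (x.2 : ℕ) - s ^ (x.1 : ℕ) * t' ^ (x.2 : ℕ))‖ := by
        simp only [boxEval, mul_sub, Finset.sum_sub_distrib]
    _ ≤ ‖b‖ * ((d : ℝ) ^ 2 * (K ^ d * (d * K ^ d * ‖t - t'‖))) := norm_sum_box_le hterm
    _ = ‖b‖ * ((d : ℝ) ^ 3 * K ^ (2 * d) * ‖t - t'‖) := by ring

theorem exists_norm_coeff_le_norm_eval (q : ℂ[X]) (i : ℕ) :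
    ∃ s : ℂ, ‖s‖ = 1 ∧ ‖q.coeff i‖ ≤ ‖q.eval s‖ := by
  obtain ⟨s, hs, hmax⟩ := (isCompact_sphere (0 : ℂ) 1).exists_isMaxOn
    (NormedSpace.sphere_nonempty.2 zero_le_one) q.continuous.norm.continuousOn
  refine ⟨s, mem_sphere_zero_iff_norm.1 hs, ?_⟩
  by_cases hi : i ∈ q.support
  · refine (pow_le_pow_iff_left₀ (norm_nonneg _) (norm_nonneg _) two_ne_zero).1 ?_
    calc ‖q.coeff i‖ ^ 2 ≤ ∑ j ∈ q.support, ‖q.coeff j‖ ^ 2 :=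
          Finset.single_le_sum (f := fun j => ‖q.coeff j‖ ^ 2) (fun _ _ => by positivity) hi
      _ = Real.circleAverage (fun z => ‖q.eval z‖ ^ 2) 0 1 := q.sum_sq_norm_coeff_eq_circleAverage
      _ ≤ ‖q.eval s‖ ^ 2 := by
          refine Real.circleAverage_mono_on_of_le_circle
            (ContinuousOn.circleIntegrable' (by fun_prop)) fun z hz => ?_
          rw [abs_one] at hz
          exact pow_le_pow_left₀ (norm_nonneg _) (hmax hz) 2
  · simp [notMem_support_iff.1 hi]

theorem exists_norm_le_norm_sum_mul_pow (c : Fin d → ℂ) (i : Fin d) :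
    ∃ s : ℂ, ‖s‖ = 1 ∧ ‖c i‖ ≤ ‖∑ j, c j * s ^ (j : ℕ)‖ := by
  obtain ⟨s, hs, h⟩ := exists_norm_coeff_le_norm_eval (∑ j : Fin d, C (c j) * X ^ (j : ℕ)) i
  exact ⟨s, hs, by simpa [eval_finsetSum, finsetSum_coeff, coeff_X_pow, Fin.val_inj] using h⟩

theorem exists_norm_le_norm_boxEval (b : Fin d × Fin d → ℂ) :
    ∃ s t : ℂ, ‖s‖ ≤ 1 ∧ ‖t‖ ≤ 1 ∧ ‖b‖ ≤ ‖boxEval b s t‖ := by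
  rcases isEmpty_or_nonempty (Fin d × Fin d) with h | h
  · exact ⟨0, 0, by simp, by simp, by simp [Subsingleton.elim b 0]⟩
  obtain ⟨⟨i, j⟩, hij⟩ := Finite.exists_max fun x => ‖b x‖
  obtain ⟨s, hs, hbs⟩ := exists_norm_le_norm_sum_mul_pow (fun k => b (k, j)) i
  obtain ⟨t, ht, hbt⟩ := exists_norm_le_norm_sum_mul_pow (fun l => ∑ k, b (k, l) * s ^ (k : ℕ)) j
  refine ⟨s, t, hs.le, ht.le, ?_⟩
  calc ‖b‖ ≤ ‖∑ l, (∑ k, b (k, l) * s ^ (k : ℕ)) * t ^ (l : ℕ)‖ :=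
        ((pi_norm_le_iff_of_nonempty _).2 hij).trans (hbs.trans hbt)
    _ = ‖boxEval b s t‖ := by
      simp only [boxEval, Fintype.sum_prod_type_right, Finset.sum_mul, mul_assoc]

end BoxPolynomial

section AuxiliaryPolynomial

theorem exists_ne_zero_X_pow_dvd_sum_smul {F ι : Type*} [Field F] [Fintype ι] (e : ι → F[X]) {m : ℕ}
    (hm : m < Fintype.card ι) : ∃ b : ι → F, b ≠ 0 ∧ X ^ m ∣ ∑ i, b i • e i := by
  let L : (ι → F) →ₗ[F] (Fin m → F) :=
    LinearMap.pi (fun k => lcoeff F k) ∘ₗ Fintype.linearCombination F e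
  obtain ⟨b, hb, hb0⟩ := Submodule.exists_mem_ne_zero_of_ne_bot
    (L.ker_ne_bot_of_finrank_lt (by simpa using hm))
  refine ⟨b, hb0, X_pow_dvd_iff.2 fun k hk => ?_⟩
  simpa [L, Fintype.linearCombination_apply] using congrFun (LinearMap.mem_ker.1 hb) ⟨k, hk⟩

theorem norm_eval_le_mul_div_pow_of_X_pow_dvd {G : ℂ[X]} {m : ℕ} (hG : X ^ m ∣ G) {r B : ℝ}
    (hr : 0 < r) (hB : ∀ z : ℂ, ‖z‖ ≤ r → ‖G.eval z‖ ≤ B) {z : ℂ} (hz : ‖z‖ ≤ r) :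
    ‖G.eval z‖ ≤ B * (‖z‖ / r) ^ m := by
  obtain ⟨H, rfl⟩ := hG
  simp only [eval_mul, eval_pow, eval_X, norm_mul, norm_pow] at hB ⊢
  have hH : ‖H.eval z‖ ≤ B / r ^ m := by
    refine Complex.norm_le_of_forall_mem_frontier_norm_le (U := ball (0 : ℂ) r)
      isBounded_ball H.differentiable.diffContOnCl (fun w hw => ?_) ?_
    · rw [frontier_ball _ hr.ne', mem_sphere_zero_iff_norm] at hw
      rw [le_div_iff₀' (by positivity)]
      simpa [hw] using hB w hw.le
    · rwa [closure_ball _ hr.ne', mem_closedBall_zero_iff]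
  calc ‖z‖ ^ m * ‖H.eval z‖ ≤ ‖z‖ ^ m * (B / r ^ m) := by gcongr
    _ = B * (‖z‖ / r) ^ m := by rw [div_pow]; ring

theorem exists_norm_eq_one_X_pow_dvd_sum_smul {𝕜 ι : Type*} [RCLike 𝕜] [Fintype ι] (e : ι → 𝕜[X])
    {m : ℕ} (hm : m < Fintype.card ι) : ∃ b : ι → 𝕜, ‖b‖ = 1 ∧ X ^ m ∣ ∑ i, b i • e i := by
  obtain ⟨b, hb, hdvd⟩ := exists_ne_zero_X_pow_dvd_sum_smul e hm
  refine ⟨(‖b‖⁻¹ : 𝕜) • b, norm_smul_inv_norm hb, ?_⟩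
  simpa [mul_smul, Finset.smul_sum] using dvd_smul_of_dvd (‖b‖⁻¹ : 𝕜) hdvd

theorem exists_norm_eq_one_boxEval_eval_le {p q : ℂ[X]} {r K : ℝ} (hr : 1 ≤ r) (hK : 1 ≤ K)
    (hp : ∀ z : ℂ, ‖z‖ ≤ r → ‖p.eval z‖ ≤ K) (hq : ∀ z : ℂ, ‖z‖ ≤ r → ‖q.eval z‖ ≤ K)
    {d m : ℕ} (hm : m < d ^ 2) : ∃ b : Fin d × Fin d → ℂ, ‖b‖ = 1 ∧
      ∀ z : ℂ, ‖z‖ ≤ 1 → ‖boxEval b (p.eval z) (q.eval z)‖ ≤ d ^ 2 * K ^ (2 * d) / r ^ m := by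
  let e (x : Fin d × Fin d) : ℂ[X] := p ^ (x.1 : ℕ) * q ^ (x.2 : ℕ)
  obtain ⟨b, hb, hdvd⟩ :=
    exists_norm_eq_one_X_pow_dvd_sum_smul e (m := m) (by simpa [← pow_two] using hm)
  have heval (z : ℂ) : (∑ x, b x • e x).eval z = boxEval b (p.eval z) (q.eval z) := by
    simp [e, boxEval, eval_finsetSum]
  refine ⟨b, hb, fun z hz => ?_⟩
  have hr0 : 0 < r := one_pos.trans_le hr
  calc ‖boxEval b (p.eval z) (q.eval z)‖
      ≤ d ^ 2 * K ^ (2 * d) * (‖z‖ / r) ^ m := by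
        rw [← heval]
        refine norm_eval_le_mul_div_pow_of_X_pow_dvd hdvd hr0 (fun w hw => ?_) (hz.trans hr)
        simpa [heval, hb] using norm_boxEval_le (b := b) hK (hp w hw) (hq w hw)
    _ ≤ d ^ 2 * K ^ (2 * d) * (1 / r) ^ m := by gcongr
    _ = d ^ 2 * K ^ (2 * d) / r ^ m := by rw [one_div, inv_pow, div_eq_mul_inv]

end AuxiliaryPolynomial

section FastApproximation

/-- A polynomial approximant `s` of `f` on the closed unit disk to which the box polynomials of
degree `< d` apply: `s` is bounded by `B` on the larger disk of radius `r`, and the gain `r ^ m`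
from a zero of order `m < d ^ 2` at the origin outweighs both the size `(A * B ^ 2) ^ d` of a
box polynomial and the error of approximation. -/
structure IsFastApproximant (f : ℂ → ℂ) (A : ℝ) (s : ℂ[X]) (d m : ℕ) (r B : ℝ) : Prop where
  lt_sq : m < d ^ 2
  one_le : 1 ≤ r
  le_bound : r ≤ B
  pow_le : (A * B ^ 2) ^ d ≤ r ^ m
  norm_eval_le : ∀ z : ℂ, ‖z‖ ≤ r → ‖s.eval z‖ ≤ B
  norm_sub_le : ∀ z : ℂ, ‖z‖ ≤ 1 → ‖f z - s.eval z‖ ≤ (r ^ m)⁻¹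

/-- A function on the closed unit disk which has fast approximants for arbitrarily large `A`;
this is the quantitative form of quasianalyticity that makes its graph pluripolar. -/
def FastApproximable (f : ℂ → ℂ) : Prop :=
  ∀ A > 0, ∃ s d m r B, IsFastApproximant f A s d m r B

theorem exists_norm_eq_one_boxEval_le {p q : ℂ[X]} {g : ℂ → ℂ} {r K η : ℝ} {d m : ℕ} (hr : 1 ≤ r)
    (hK : 1 ≤ K) (hη : 0 ≤ η) (hm : m < d ^ 2) (hp : ∀ z : ℂ, ‖z‖ ≤ r → ‖p.eval z‖ ≤ K)
    (hq : ∀ z : ℂ, ‖z‖ ≤ r → ‖q.eval z‖ ≤ K) (hg : ∀ z : ℂ, ‖z‖ ≤ 1 → ‖g z‖ ≤ K)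
    (hgq : ∀ z : ℂ, ‖z‖ ≤ 1 → ‖g z - q.eval z‖ ≤ η * (r ^ m)⁻¹) :
    ∃ b : Fin d × Fin d → ℂ, ‖b‖ = 1 ∧ ∀ z : ℂ, ‖z‖ ≤ 1 →
      ‖boxEval b (p.eval z) (g z)‖ ≤ (8 * (1 + η) * K ^ 2) ^ d * (r ^ m)⁻¹ := by
  obtain ⟨b, hb, hbox⟩ := exists_norm_eq_one_boxEval_eval_le hr hK hp hq hm
  have hd : d ≠ 0 := by rintro rfl; simp at hm
  have hd1 : (1 : ℝ) ≤ d := Nat.one_le_cast.2 (Nat.one_le_iff_ne_zero.2 hd)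
  have hd2 : (d : ℝ) ≤ 2 ^ d := by exact_mod_cast Nat.lt_two_pow_self.le
  refine ⟨b, hb, fun z hz => ?_⟩
  calc ‖boxEval b (p.eval z) (g z)‖
      ≤ ‖boxEval b (p.eval z) (q.eval z)‖ +
          ‖boxEval b (p.eval z) (g z) - boxEval b (p.eval z) (q.eval z)‖ := norm_le_insert' _ _
    _ ≤ d ^ 2 * K ^ (2 * d) * (r ^ m)⁻¹ + d ^ 3 * K ^ (2 * d) * (η * (r ^ m)⁻¹) := by
        gcongr
        · exact hbox z hz
        · refine (norm_boxEval_sub_le hK (hp z (hz.trans hr)) (hg z hz)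
            (hq z (hz.trans hr))).trans ?_
          rw [hb, one_mul]
          gcongr
          exact hgq z hz
    _ ≤ d ^ 3 * K ^ (2 * d) * (r ^ m)⁻¹ + d ^ 3 * K ^ (2 * d) * (η * (r ^ m)⁻¹) := by
        gcongr; norm_num
    _ = (d : ℝ) ^ 3 * (1 + η) * K ^ (2 * d) * (r ^ m)⁻¹ := by ring
    _ ≤ (2 ^ d) ^ 3 * (1 + η) ^ d * K ^ (2 * d) * (r ^ m)⁻¹ := by
        gcongr; exact le_self_pow₀ (le_add_of_nonneg_right hη) hd
    _ = (8 * (1 + η) * K ^ 2) ^ d * (r ^ m)⁻¹ := by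
        rw [mul_pow, mul_pow, pow_right_comm, pow_mul K]; norm_num

theorem norm_inv_mul_sub_le {a c : ℂ} {ρ R D : ℝ} (hρ : 0 < ρ) (hR : 1 ≤ R) (ha : ‖a‖ ≤ R)
    (hc : ‖c‖ ≤ D) : ‖(ρ : ℂ)⁻¹ * (a - c)‖ ≤ R * (ρ⁻¹ * (1 + D) + 1) := by
  have hD : 0 ≤ D := (norm_nonneg c).trans hc
  calc ‖(ρ : ℂ)⁻¹ * (a - c)‖ ≤ ρ⁻¹ * (R + D) := by
        refine norm_mul_le_of_le ?_ ((norm_sub_le a c).trans (add_le_add ha hc))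
        rw [norm_inv, Complex.norm_of_nonneg hρ.le]
    _ ≤ ρ⁻¹ * (R + R * D) := by gcongr; exact le_mul_of_one_le_left hD hR
    _ ≤ R * (ρ⁻¹ * (1 + D) + 1) := by linarith

/-- The box polynomial with coefficients `b` in the coordinates of the bidisk of centre `x₀` and
radius `ρ`. -/
def centredBox {d : ℕ} (b : Fin d × Fin d → ℂ) (x₀ : ℂ × ℂ) (ρ : ℝ) (x : ℂ × ℂ) : ℂ :=
  boxEval b ((ρ : ℂ)⁻¹ * (x.1 - x₀.1)) ((ρ : ℂ)⁻¹ * (x.2 - x₀.2))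

theorem exists_norm_le_norm_centredBox {d : ℕ} (b : Fin d × Fin d → ℂ) (x₀ : ℂ × ℂ) {ρ : ℝ}
    (hρ : 0 < ρ) : ∃ x ∈ closedBall x₀ ρ, ‖b‖ ≤ ‖centredBox b x₀ ρ x‖ := by
  obtain ⟨s, t, hs, ht, hst⟩ := exists_norm_le_norm_boxEval b
  have hρ' : (ρ : ℂ) ≠ 0 := Complex.ofReal_ne_zero.2 hρ.ne'
  refine ⟨x₀ + (ρ * s, ρ * t), ?_, by simpa [centredBox, hρ'] using hst⟩
  rw [mem_closedBall, dist_self_add_left, Prod.norm_def, max_le_iff, norm_mul, norm_mul,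
    Complex.norm_of_nonneg hρ.le]
  exact ⟨mul_le_of_le_one_right hρ.le hs, mul_le_of_le_one_right hρ.le ht⟩

theorem isPolarWitness_centredBox {S : Set (ℂ × ℂ)} {d L : ℕ} {b : Fin d × Fin d → ℂ}
    {x₀ : ℂ × ℂ} {ρ δ κ : ℝ} (hρ : 0 < ρ) (hκ : κ = ρ⁻¹ * (1 + ‖x₀‖) + 1) (hL : 0 < L)
    (hd : 0 < d) (hδ : 2 + 2 * κ ≤ L * δ) (hb : ‖b‖ = 1)
    (hS : ∀ x ∈ S, ‖centredBox b x₀ ρ x‖ ≤ Real.exp (-(L * d : ℕ))) :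
    IsPolarWitness S δ (L * d) (centredBox b x₀ ρ) := by
  refine ⟨differentiable_boxEval (by fun_prop) (by fun_prop), Nat.mul_pos hL hd, fun x => ?_, hS⟩
  have hκ0 : 0 ≤ κ := hκ ▸ by positivity
  have hcoord {a c : ℂ} (ha : ‖a‖ ≤ ‖x‖) (hc : ‖c‖ ≤ ‖x₀‖) :
      ‖(ρ : ℂ)⁻¹ * (a - c)‖ ≤ Real.exp ((1 + ‖x‖) * κ) := by
    have hle := norm_inv_mul_sub_le hρ (le_add_of_nonneg_right (norm_nonneg x))
      (ha.trans (le_add_of_nonneg_left zero_le_one)) hc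
    rw [← hκ] at hle
    exact hle.trans ((le_add_of_nonneg_right zero_le_one).trans (Real.add_one_le_exp _))
  calc ‖centredBox b x₀ ρ x‖ ≤ Real.exp (d * (2 + 2 * ((1 + ‖x‖) * κ))) := by
        simpa only [centredBox, hb, one_mul] using norm_boxEval_le_exp (b := b) (by positivity)
          (hcoord (norm_fst_le x) (norm_fst_le x₀)) (hcoord (norm_snd_le x) (norm_snd_le x₀))
    _ ≤ Real.exp (d * ((2 + 2 * κ) * (1 + ‖x‖))) := by
        gcongr; linarith [norm_nonneg x]
    _ ≤ Real.exp (d * (L * δ * (1 + ‖x‖))) := by gcongr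
    _ = Real.exp ((L * d : ℕ) * (δ * (1 + ‖x‖))) := by push_cast; ring_nf

theorem IsFastApproximant.norm_le {f : ℂ → ℂ} {A : ℝ} {s : ℂ[X]} {d m : ℕ} {r B : ℝ}
    (h : IsFastApproximant f A s d m r B) {z : ℂ} (hz : ‖z‖ ≤ 1) : ‖f z‖ ≤ 2 * B := by
  have hs := h.norm_eval_le z (hz.trans h.one_le)
  have hfs := (h.norm_sub_le z hz).trans (inv_le_one_of_one_le₀ (one_le_pow₀ h.one_le))
  linarith [norm_le_norm_add_norm_sub' (f z) (s.eval z), h.one_le, h.le_bound]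

theorem IsFastApproximant.exists_isPolarWitness {f : ℂ → ℂ} {s : ℂ[X]} {d m L : ℕ}
    {r B ρ δ κ : ℝ} {x₀ : ℂ × ℂ} (hρ : 0 < ρ) (hκ : κ = ρ⁻¹ * (1 + ‖x₀‖) + 1) (hL : 0 < L)
    (hδ : 2 + 2 * κ ≤ L * δ)
    (h : IsFastApproximant f (8 * (1 + ρ⁻¹) * (2 * κ) ^ 2 * Real.exp L) s d m r B) :
    ∃ P, IsPolarWitness {p : ℂ × ℂ | ∃ z ∈ closedBall (0 : ℂ) 1, p = (z, f z)} δ (L * d) P ∧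
      ∃ x ∈ closedBall x₀ ρ, 1 ≤ ‖P x‖ := by
  have hκ1 : 1 ≤ κ := hκ ▸ le_add_of_nonneg_left (by positivity)
  have hr := h.one_le
  have hB : 1 ≤ B := hr.trans h.le_bound
  have hd : 0 < d := Nat.pos_of_ne_zero fun hd => by simpa [hd] using h.lt_sq
  have hcoord {a c : ℂ} (ha : ‖a‖ ≤ 2 * B) (hc : ‖c‖ ≤ ‖x₀‖) :
      ‖(ρ : ℂ)⁻¹ * (a - c)‖ ≤ 2 * B * κ :=
    hκ ▸ norm_inv_mul_sub_le hρ (by linarith) ha hc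
  obtain ⟨b, hb, hbox⟩ := exists_norm_eq_one_boxEval_le (p := C (ρ : ℂ)⁻¹ * (X - C x₀.1))
    (q := C (ρ : ℂ)⁻¹ * (s - C x₀.2)) (g := fun z => (ρ : ℂ)⁻¹ * (f z - x₀.2))
    (K := 2 * B * κ) (η := ρ⁻¹) hr (by nlinarith) (inv_pos.2 hρ).le h.lt_sq
    (fun z hz => by
      simpa using hcoord (a := z) (by linarith [hz.trans h.le_bound]) (norm_fst_le x₀))
    (fun z hz => by
      simpa using hcoord (a := s.eval z) (by linarith [h.norm_eval_le z hz]) (norm_snd_le x₀))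
    (fun z hz => hcoord (h.norm_le hz) (norm_snd_le x₀))
    (fun z hz => by
      simpa [← mul_sub, abs_of_pos hρ] using
        mul_le_mul_of_nonneg_left (h.norm_sub_le z hz) (inv_pos.2 hρ).le)
  obtain ⟨x, hx, hbx⟩ := exists_norm_le_norm_centredBox b x₀ hρ
  refine ⟨_, isPolarWitness_centredBox hρ hκ hL hd hδ hb ?_, x, hx, hb ▸ hbx⟩
  rintro _ ⟨z, hz, rfl⟩
  calc ‖centredBox b x₀ ρ (z, f z)‖
      ≤ (8 * (1 + ρ⁻¹) * (2 * B * κ) ^ 2) ^ d * (r ^ m)⁻¹ := by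
        simpa [centredBox] using hbox z (mem_closedBall_zero_iff.1 hz)
    _ = Real.exp (-(L * d : ℕ)) *
          ((8 * (1 + ρ⁻¹) * (2 * κ) ^ 2 * Real.exp L * B ^ 2) ^ d * (r ^ m)⁻¹) := by
        rw [Real.exp_neg, Nat.cast_mul, mul_comm (L : ℝ), Real.exp_nat_mul,
          eq_inv_mul_iff_mul_eq₀ (by positivity), ← mul_assoc, ← mul_pow]
        congr 2
        ring
    _ ≤ Real.exp (-(L * d : ℕ)) := mul_le_of_le_one_right (Real.exp_pos _).le
        (mul_inv_le_one_of_le₀ h.pow_le (by positivity))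

theorem FastApproximable.pluripolar_graph {f : ℂ → ℂ} (hf : FastApproximable f) :
    Pluripolar {p : ℂ × ℂ | ∃ z ∈ closedBall (0 : ℂ) 1, p = (z, f z)} := by
  refine pluripolar_of_dense fun δ hδ => Metric.dense_iff.2 fun x₀ ε hε => ?_
  obtain ⟨L, hL⟩ := exists_nat_gt ((2 + 2 * ((ε / 2)⁻¹ * (1 + ‖x₀‖) + 1)) / δ)
  have hL0 : 0 < L := Nat.cast_pos.1 (hL.trans_le' (by positivity))
  obtain ⟨s, d, m, r, B, h⟩ := hf (8 * (1 + (ε / 2)⁻¹) *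
    (2 * ((ε / 2)⁻¹ * (1 + ‖x₀‖) + 1)) ^ 2 * Real.exp L) (by positivity)
  obtain ⟨P, hP, x, hx, hPx⟩ := h.exists_isPolarWitness (half_pos hε) rfl hL0
    ((div_lt_iff₀ hδ).1 hL).le
  refine ⟨x, closedBall_subset_ball (half_lt_self hε) hx, _, P, hP, hPx.trans_lt' ?_⟩
  exact Real.exp_lt_one_iff.2 (neg_lt_zero.2 (mul_pos (Nat.cast_pos.2 hP.pos) hδ))

end FastApproximation

section RationalApproximation

variable {f : ℂ → ℂ}

theorem rhoDisk_nonneg (f : ℂ → ℂ) (k : ℕ) : 0 ≤ rhoDisk f k :=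
  Real.sInf_nonneg fun _ ⟨_, _, _, _, _, h⟩ =>
    (norm_nonneg _).trans (h 0 (mem_closedBall_self zero_le_one))

theorem rhoDisk_le_of_polynomial {k : ℕ} {t : ℝ} {p : ℂ[X]} (hp : p.natDegree ≤ k)
    (h : ∀ z : ℂ, ‖z‖ ≤ 1 → ‖f z - p.eval z‖ ≤ t) : rhoDisk f k ≤ t := by
  refine csInf_le ⟨0, ?_⟩ ⟨p, 1, hp, by simp, by simp, fun z hz => ?_⟩
  · rintro _ ⟨p, q, -, -, -, hpq⟩
    exact (norm_nonneg _).trans (hpq 0 (mem_closedBall_self zero_le_one))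
  · simpa using h z (mem_closedBall_zero_iff.1 hz)

theorem liminf_rhoDisk_rpow_le {a : ℝ} (ha : 0 ≤ a) (h : ∃ᶠ k in atTop, rhoDisk f k ≤ a ^ k) :
    liminf (fun k : ℕ => rhoDisk f k ^ (1 / (k : ℝ))) atTop ≤ a := by
  refine liminf_le_of_frequently_le
    ((h.and_eventually (eventually_ne_atTop 0)).mono fun k ⟨hk, hk0⟩ => ?_)
    (isBoundedUnder_of ⟨0, fun k => Real.rpow_nonneg (rhoDisk_nonneg f k) _⟩)
  calc rhoDisk f k ^ (1 / (k : ℝ)) ≤ (a ^ k) ^ (1 / (k : ℝ)) :=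
        Real.rpow_le_rpow (rhoDisk_nonneg f k) hk (by positivity)
    _ = a := by rw [one_div, Real.pow_rpow_inv_natCast ha hk0]

end RationalApproximation

section LacunarySeries

open scoped Nat

theorem summable_pow_factorial {a : ℝ} (ha0 : 0 ≤ a) (ha1 : a < 1) :
    Summable fun j : ℕ => a ^ j ! :=
  .of_nonneg_of_le (fun _ => by positivity)
    (fun j => pow_le_pow_of_le_one ha0 ha1.le j.self_le_factorial)
    (summable_geometric_of_lt_one ha0 ha1)

theorem tsum_pow_factorial_add_le {a : ℝ} (ha0 : 0 ≤ a) (ha1 : a < 1) {n : ℕ} (hn : 1 ≤ n) :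
    ∑' i : ℕ, a ^ (i + n) ! ≤ a ^ n ! * (1 - a)⁻¹ := by
  rw [← tsum_geometric_of_lt_one ha0 ha1, ← tsum_mul_left]
  refine Summable.tsum_le_tsum (fun i => ?_)
    ((summable_pow_factorial ha0 ha1).comp_injective (add_left_injective n))
    ((summable_geometric_of_lt_one ha0 ha1).mul_left _)
  rw [← pow_add, add_comm (n !)]
  exact pow_le_pow_of_le_one ha0 ha1.le (Nat.add_factorial_le_factorial_add i hn)

theorem norm_lacunary_term_le (j : ℕ) {z : ℂ} (hz : ‖z‖ ≤ 1) :
    ‖((2 : ℂ) ^ j !)⁻¹ * z ^ (j + 1)!‖ ≤ (1 / 2 : ℝ) ^ j ! := by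
  rw [norm_mul, norm_inv, norm_pow, norm_pow, Complex.norm_ofNat, ← inv_pow, ← one_div]
  exact mul_le_of_le_one_right (by positivity) (pow_le_one₀ (norm_nonneg z) hz)

theorem summable_half_pow_factorial : Summable fun j : ℕ => (1 / 2 : ℝ) ^ j ! :=
  summable_pow_factorial (by norm_num) (by norm_num)

theorem continuousOn_lacunaryF : ContinuousOn lacunaryF (closedBall 0 1) :=
  continuousOn_tsum (fun _ => by fun_prop) summable_half_pow_factorial
    fun j _ hz => norm_lacunary_term_le j (mem_closedBall_zero_iff.1 hz)

theorem differentiableOn_lacunaryF : DifferentiableOn ℂ lacunaryF (ball 0 1) :=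
  Complex.differentiableOn_tsum_of_summable_norm summable_half_pow_factorial (fun _ => by fun_prop)
    isOpen_ball fun j _ hz => norm_lacunary_term_le j (mem_ball_zero_iff.1 hz).le

/-- The sum of the first `n` terms of the lacunary series, as a polynomial. -/
def lacunaryPoly (n : ℕ) : ℂ[X] :=
  ∑ j ∈ Finset.range n, C ((2 : ℂ) ^ j !)⁻¹ * X ^ (j + 1)!

theorem eval_lacunaryPoly (n : ℕ) (z : ℂ) :
    (lacunaryPoly n).eval z = ∑ j ∈ Finset.range n, ((2 : ℂ) ^ j !)⁻¹ * z ^ (j + 1)! := by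
  simp [lacunaryPoly, eval_finsetSum]

theorem natDegree_lacunaryPoly_le (n : ℕ) : (lacunaryPoly n).natDegree ≤ n ! :=
  natDegree_sum_le_of_forall_le _ _ fun _ hj =>
    (natDegree_C_mul_X_pow_le _ _).trans (Nat.factorial_le (Finset.mem_range.1 hj))

theorem norm_lacunaryF_sub_eval_le {n : ℕ} (hn : 1 ≤ n) {z : ℂ} (hz : ‖z‖ ≤ 1) :
    ‖lacunaryF z - (lacunaryPoly n).eval z‖ ≤ 2 * (1 / 2) ^ n ! := by
  have hsum : Summable fun j : ℕ => ((2 : ℂ) ^ j !)⁻¹ * z ^ (j + 1)! :=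
    .of_norm_bounded summable_half_pow_factorial fun j => norm_lacunary_term_le j hz
  rw [lacunaryF, eval_lacunaryPoly, ← hsum.sum_add_tsum_nat_add n, add_sub_cancel_left]
  calc ‖∑' i : ℕ, ((2 : ℂ) ^ (i + n)!)⁻¹ * z ^ (i + n + 1)!‖
      ≤ ∑' i : ℕ, (1 / 2 : ℝ) ^ (i + n)! :=
        tsum_of_norm_bounded ((summable_nat_add_iff n).2 summable_half_pow_factorial).hasSum
          fun i => norm_lacunary_term_le (i + n) hz
    _ ≤ (1 / 2) ^ n ! * (1 - 1 / 2)⁻¹ := tsum_pow_factorial_add_le (by norm_num) (by norm_num) hn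
    _ = 2 * (1 / 2) ^ n ! := by ring

theorem norm_eval_lacunaryPoly_le {n : ℕ} {r : ℝ} (hr : 1 ≤ r) (hrn : r ^ n = 2) {z : ℂ}
    (hz : ‖z‖ ≤ r) : ‖(lacunaryPoly n).eval z‖ ≤ n := by
  rw [eval_lacunaryPoly]
  refine (norm_sum_le_of_le (n := fun _ => 1) _ fun j hj => ?_).trans (by simp)
  rw [norm_mul, norm_inv, norm_pow, norm_pow, Complex.norm_ofNat, inv_mul_le_one₀ (by positivity)]
  calc ‖z‖ ^ (j + 1)! ≤ r ^ (j + 1)! := by gcongr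
    _ ≤ r ^ (n * j !) := by
        rw [Nat.factorial_succ]
        exact pow_le_pow_right₀ hr (Nat.mul_le_mul_right _ (Finset.mem_range.1 hj))
    _ = 2 ^ j ! := by rw [pow_mul, hrn]

theorem frequently_rhoDisk_lacunaryF_le :
    ∃ᶠ k in atTop, rhoDisk lacunaryF k ≤ (3 / 4) ^ k := by
  refine frequently_atTop.2 fun a => ⟨(a + 2)!, by linarith [(a + 2).self_le_factorial], ?_⟩
  have hfac : 2 ≤ (a + 2)! := by linarith [(a + 2).self_le_factorial]
  refine rhoDisk_le_of_polynomial (natDegree_lacunaryPoly_le _) fun z hz => ?_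
  calc ‖lacunaryF z - (lacunaryPoly (a + 2)).eval z‖ ≤ 2 * (1 / 2) ^ (a + 2)! :=
        norm_lacunaryF_sub_eval_le (by omega) hz
    _ ≤ (3 / 2) ^ (a + 2)! * (1 / 2) ^ (a + 2)! := by
        gcongr
        calc (2 : ℝ) ≤ (3 / 2) ^ 2 := by norm_num
          _ ≤ (3 / 2) ^ (a + 2)! := by gcongr; norm_num
    _ = (3 / 4) ^ (a + 2)! := by rw [← mul_pow]; norm_num

theorem eventually_mul_pow_le_two_pow (a : ℝ) (k : ℕ) :
    ∀ᶠ n : ℕ in atTop, a * (n : ℝ) ^ k ≤ 2 ^ n := by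
  have h := (tendsto_pow_const_div_const_pow_of_one_lt k (one_lt_two (α := ℝ))).const_mul a
  rw [mul_zero] at h
  filter_upwards [h.eventually_le_const one_pos] with n hn
  rwa [← mul_div_assoc, div_le_one (by positivity)] at hn

theorem eventually_pow_le_factorial (k : ℕ) : ∀ᶠ n : ℕ in atTop, n ^ k ≤ n ! := by
  have h := FloorSemiring.tendsto_pow_div_factorial_atTop (2 : ℝ)
  filter_upwards [h.eventually_le_const one_pos, eventually_mul_pow_le_two_pow 1 k] with n hn hk
  rw [div_le_one (by positivity)] at hn
  rw [one_mul] at hk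
  exact_mod_cast hk.trans hn

theorem isFastApproximant_lacunaryPoly {A r : ℝ} {n : ℕ} (hA : 0 ≤ A) (hn : 2 ≤ n)
    (hfac : n ^ 3 ≤ n !) (hAn : 2 * A * n ^ 2 ≤ 2 ^ n) (hr : 1 ≤ r) (hrn : r ^ n = 2) :
    IsFastApproximant lacunaryF A (lacunaryPoly n) (n ^ 2) (n * (n ^ 3 - 1)) r n := by
  have hn0 : 0 < n := by omega
  have hpow : 2 * r ^ (n * (n ^ 3 - 1)) = 2 ^ n ^ 3 := by
    rw [pow_mul, hrn, ← pow_succ', Nat.sub_add_cancel (Nat.pow_pos hn0)]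
  refine ⟨?_, hr, ?_, ?_, fun z hz => norm_eval_lacunaryPoly_le hr hrn hz, fun z hz => ?_⟩
  · calc n * (n ^ 3 - 1) < n * n ^ 3 := by gcongr; exact Nat.sub_lt (Nat.pow_pos hn0) one_pos
      _ = (n ^ 2) ^ 2 := by ring
  · calc r ≤ r ^ n := le_self_pow₀ hr hn0.ne'
      _ ≤ n := by rw [hrn]; exact_mod_cast hn
  · refine le_of_mul_le_mul_left ?_ (two_pos (α := ℝ))
    calc 2 * (A * n ^ 2) ^ n ^ 2 ≤ 2 ^ n ^ 2 * (A * n ^ 2) ^ n ^ 2 := by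
          gcongr; exact le_self_pow₀ one_le_two (by positivity)
      _ = (2 * A * n ^ 2) ^ n ^ 2 := by rw [← mul_pow, mul_assoc]
      _ ≤ (2 ^ n) ^ n ^ 2 := by gcongr
      _ = 2 * r ^ (n * (n ^ 3 - 1)) := by rw [hpow, ← pow_mul, pow_succ' n 2]
  · calc ‖lacunaryF z - (lacunaryPoly n).eval z‖ ≤ 2 * (1 / 2) ^ n ! :=
          norm_lacunaryF_sub_eval_le hn0 hz
      _ ≤ 2 * (1 / 2) ^ n ^ 3 :=
          mul_le_mul_of_nonneg_left (pow_le_pow_of_le_one (by norm_num) (by norm_num) hfac)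
            zero_le_two
      _ = (r ^ (n * (n ^ 3 - 1)))⁻¹ := by
          rw [one_div, inv_pow, ← hpow]; field_simp

theorem fastApproximable_lacunaryF : FastApproximable lacunaryF := fun A hA => by
  obtain ⟨n, hn, hfac, hAn⟩ := ((eventually_ge_atTop 2).and
    ((eventually_pow_le_factorial 3).and (eventually_mul_pow_le_two_pow (2 * A) 2))).exists
  refine ⟨_, _, _, _, _, isFastApproximant_lacunaryPoly (r := 2 ^ (n : ℝ)⁻¹) hA.le hn hfac hAn
    (Real.one_le_rpow one_le_two (by positivity)) (Real.rpow_inv_natCast_pow zero_le_two ?_)⟩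
  omega

end LacunarySeries

/-- The function `f(z) = Σ_{k≥1} 2^{−(k−1)!} z^{k!}` is holomorphic on the open unit
disk, continuous on the closed unit disk, quasianalytic in the sense of Gonchar on
the closed unit disk (`liminf ρ_k(f)^{1/k} < 1`), and consequently its graph over the
closed unit disk is pluripolar in `ℂ²`. -/
theorem lacunary_series_gonchar_and_pluripolar :
    DifferentiableOn ℂ lacunaryF (ball (0 : ℂ) 1) ∧
    ContinuousOn lacunaryF (closedBall (0 : ℂ) 1) ∧
    Filter.liminf (fun k : ℕ => (rhoDisk lacunaryF k) ^ (1 / (k : ℝ)))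
      Filter.atTop < 1 ∧
    Pluripolar {p : ℂ × ℂ | ∃ z ∈ closedBall (0 : ℂ) 1, p = (z, lacunaryF z)} :=
  ⟨differentiableOn_lacunaryF, continuousOn_lacunaryF,
    (liminf_rhoDisk_rpow_le (by norm_num) frequently_rhoDisk_lacunaryF_le).trans_lt (by norm_num),
    fastApproximable_lacunaryF.pluripolar_graph⟩
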